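/- Let φ_ε be a solution of the nonlinear eigenvalue problem (EV_ε), and set ā_ε = (ε a*_ε / 2)^{1/2}. Then there exists 0 < γ̃ < 1 such that, for every m ∈ εℤⁿ ∩ Ω, the oscillation of φ_ε over the annulus B_{ε/2}(m) \ B_{ā_ε}(m) is o(ε^{γ̃}). -/

import Mathlib

open Set Filter Metric MeasureTheory Topology Asymptotics

noncomputable section

/-- Euclidean space ℝⁿ. -/
abbrev Eucl (n : ℕ) := EuclideanSpace ℝ (Fin n)

/-- The points of the lattice `εℤⁿ`. -/
def latticePts (n : ℕ) (ε : ℝ) : Set (Eucl n) :=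
  {m | ∀ i, ∃ z : ℤ, m i = ε * (z : ℝ)}

/-- The union of closed balls of radius `a` centered at the lattice points `εℤⁿ`
(the periodic holes `T_{a_ε}`). -/
def holes (n : ℕ) (ε a : ℝ) : Set (Eucl n) :=
  ⋃ m ∈ latticePts n ε, closedBall m a

/-- The Laplacian of a function on ℝⁿ (sum of its second partial derivatives). -/
def lap {n : ℕ} (u : Eucl n → ℝ) (x : Eucl n) : ℝ :=
  ∑ i, fderiv ℝ (fun y => fderiv ℝ u y (EuclideanSpace.single i 1)) x
    (EuclideanSpace.single i 1)

/-- The harmonic capacity of a compact set, via the Dirichlet energy characterization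
(which agrees with the flux of the capacitary potential through the boundary). -/
def capacity (n : ℕ) (K : Set (Eucl n)) : ℝ :=
  sInf {c | ∃ v : Eucl n → ℝ, ContDiff ℝ (⊤ : ℕ∞) v ∧ HasCompactSupport v ∧
    (∀ x ∈ K, 1 ≤ v x) ∧ c = ∫ x, ‖fderiv ℝ v x‖ ^ 2}

/-- The critical scale `a*_ε = ε^(n/(n-2))` (for `n ≥ 3`). -/
def aStar (n : ℕ) (ε : ℝ) : ℝ := ε ^ ((n : ℝ) / ((n : ℝ) - 2))

/-- A set has smooth boundary: it is the strict sublevel set of a smooth function with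
nonvanishing differential on the boundary. -/
def HasSmoothBoundary {n : ℕ} (Ω : Set (Eucl n)) : Prop :=
  ∃ f : Eucl n → ℝ, ContDiff ℝ (⊤ : ℕ∞) f ∧ Ω = {x | f x < 0} ∧
    ∀ x ∈ frontier Ω, fderiv ℝ f x ≠ 0

/-- The heat operator `H[ψ] = Δψ - ∂_t ψ` applied to a space-time function. -/
def heatOp {n : ℕ} (ψ : Eucl n → ℝ → ℝ) (x : Eucl n) (t : ℝ) : ℝ :=
  lap (fun y => ψ y t) x - deriv (fun s => ψ x s) t

/-- `u` is a viscosity supersolution of `F[u] = 0` on `Q`: whenever a smooth test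
function touches `u` from below at a point of `Q`, the operator evaluated on the test
function is `≤ 0` there. -/
def ViscSupersol {n : ℕ} (F : (Eucl n → ℝ → ℝ) → Eucl n → ℝ → ℝ)
    (Q : Set (Eucl n × ℝ)) (u : Eucl n → ℝ → ℝ) : Prop :=
  ∀ ψ : Eucl n → ℝ → ℝ, ContDiff ℝ (⊤ : ℕ∞) (fun p : Eucl n × ℝ => ψ p.1 p.2) →
    ∀ p ∈ Q, ψ p.1 p.2 = u p.1 p.2 → (∀ᶠ q in 𝓝[Q] p, ψ q.1 q.2 ≤ u q.1 q.2) →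
      F ψ p.1 p.2 ≤ 0

/-- `u` is a viscosity subsolution of `F[u] = 0` on `Q`. -/
def ViscSubsol {n : ℕ} (F : (Eucl n → ℝ → ℝ) → Eucl n → ℝ → ℝ)
    (Q : Set (Eucl n × ℝ)) (u : Eucl n → ℝ → ℝ) : Prop :=
  ∀ ψ : Eucl n → ℝ → ℝ, ContDiff ℝ (⊤ : ℕ∞) (fun p : Eucl n × ℝ => ψ p.1 p.2) →
    ∀ p ∈ Q, ψ p.1 p.2 = u p.1 p.2 → (∀ᶠ q in 𝓝[Q] p, u q.1 q.2 ≤ ψ q.1 q.2) →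
      0 ≤ F ψ p.1 p.2

/-- The highly oscillating obstacle `φ_ε = φ · χ_{T_{a_ε}}`. -/
def oscObstacle (n : ℕ) (ε a : ℝ) (φ : Eucl n → ℝ → ℝ) : Eucl n → ℝ → ℝ :=
  fun x t => (holes n ε a).indicator (fun y => φ y t) x

/-- `u` is a viscosity supersolution of the heat equation on `Q_T = Ω × (0,T]`, above the
obstacle `obst`, vanishing on the lateral boundary, with initial data `g`. -/
def IsSupersolHeatObstacle {n : ℕ} (Ω : Set (Eucl n)) (T : ℝ)
    (obst : Eucl n → ℝ → ℝ) (g : Eucl n → ℝ) (u : Eucl n → ℝ → ℝ) : Prop :=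
  ViscSupersol heatOp (Ω ×ˢ Ioc 0 T) u ∧
  (∀ x ∈ frontier Ω, ∀ t ∈ Ioc (0:ℝ) T, u x t = 0) ∧
  (∀ x ∈ Ω, ∀ t ∈ Ioc (0:ℝ) T, obst x t ≤ u x t) ∧
  (∀ x ∈ Ω, u x 0 = g x)

/-- `u` is the least viscosity supersolution of the obstacle problem. -/
def IsLeastSupersolHeatObstacle {n : ℕ} (Ω : Set (Eucl n)) (T : ℝ)
    (obst : Eucl n → ℝ → ℝ) (g : Eucl n → ℝ) (u : Eucl n → ℝ → ℝ) : Prop :=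
  IsSupersolHeatObstacle Ω T obst g u ∧
  ∀ v, IsSupersolHeatObstacle Ω T obst g v →
    ∀ x ∈ Ω, ∀ t ∈ Ioc (0:ℝ) T, u x t ≤ v x t

/-- Difference quotient of size `ε` in direction `e`. -/
def dquot {n : ℕ} (ε : ℝ) (e : Eucl n) (f : Eucl n → ℝ) (x : Eucl n) : ℝ :=
  (f (x + ε • e) - f x) / ε

/-- Norm of the discrete gradient `‖Δ^ε_e f(x)‖ = (Σ_i |Δ^ε_{e_i} f(x)|²)^{1/2}`. -/
def dgradNorm {n : ℕ} (ε : ℝ) (f : Eucl n → ℝ) (x : Eucl n) : ℝ :=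
  Real.sqrt (∑ i, (dquot ε (EuclideanSpace.single i 1) f x) ^ 2)

/-- A unit lattice direction `e ∈ ℤⁿ`, `|e| = 1`. -/
def UnitLatticeDir (n : ℕ) (e : Eucl n) : Prop :=
  e ∈ latticePts n 1 ∧ ‖e‖ = 1

/-- The `ε`-periodic corrector : `Δw = k` outside the holes of radius `a`,
`w = 1` on the holes. -/
def IsCorrector (n : ℕ) (ε a k : ℝ) (w : Eucl n → ℝ) : Prop :=
  Continuous w ∧ ContDiffOn ℝ 2 w (holes n ε a)ᶜ ∧
  (∀ x ∉ holes n ε a, lap w x = k) ∧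
  (∀ x ∈ holes n ε a, w x = 1) ∧
  (∀ m ∈ latticePts n ε, ∀ x, w (x + m) = w x)

/-- `liminf_{ε→0} inf_{x} w_ε(x)`, computed in the extended reals. -/
def liminfInf (n : ℕ) (w : ℝ → Eucl n → ℝ) : EReal :=
  Filter.liminf (fun ε => ⨅ x, ((w ε x : ℝ) : EReal)) (𝓝[>] (0:ℝ))

/-- Solution of the nonlinear eigenvalue problem (EV_ε) in the perforated domain
with holes of radius `a`, extended by zero outside `Ω_{a}`. -/
def IsEVSol (n : ℕ) (Ω : Set (Eucl n)) (ε a p : ℝ) (φ : Eucl n → ℝ) : Prop :=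
  ContinuousOn φ (closure Ω) ∧
  ContDiffOn ℝ 2 φ (Ω \ holes n ε a) ∧
  (∀ x ∈ Ω \ holes n ε a, lap φ x + φ x ^ p = 0) ∧
  (∀ x ∈ Ω \ holes n ε a, 0 < φ x) ∧
  (∀ x, x ∉ Ω \ holes n ε a → φ x = 0)

/-- Elliptic viscosity supersolution of `F[u] = 0` on `D`. -/
def ViscSupersolE {n : ℕ} (F : (Eucl n → ℝ) → Eucl n → ℝ) (D : Set (Eucl n))
    (u : Eucl n → ℝ) : Prop :=
  ∀ ψ : Eucl n → ℝ, ContDiff ℝ (⊤ : ℕ∞) ψ → ∀ x ∈ D, ψ x = u x →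
    (∀ᶠ y in 𝓝[D] x, ψ y ≤ u y) → F ψ x ≤ 0

/-- Elliptic viscosity subsolution of `F[u] = 0` on `D`. -/
def ViscSubsolE {n : ℕ} (F : (Eucl n → ℝ) → Eucl n → ℝ) (D : Set (Eucl n))
    (u : Eucl n → ℝ) : Prop :=
  ∀ ψ : Eucl n → ℝ, ContDiff ℝ (⊤ : ℕ∞) ψ → ∀ x ∈ D, ψ x = u x →
    (∀ᶠ y in 𝓝[D] x, u y ≤ ψ y) → 0 ≤ F ψ x

/-- The ε-periodic smooth cutoff `ξ` used for the initial data of (PME_ε). -/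
def PMECutoff (n : ℕ) (ε : ℝ) (ξ : Eucl n → ℝ) : Prop :=
  ContDiff ℝ (⊤ : ℕ∞) ξ ∧ (∀ x, 0 ≤ ξ x ∧ ξ x ≤ 1) ∧
  (∀ x ∈ holes n ε (aStar n ε), ξ x = 0) ∧
  (∀ x ∉ holes n ε (ε ^ (((n : ℝ) - 1) / ((n : ℝ) - 2))), ξ x = 1) ∧
  (∀ x ∈ holes n ε (ε ^ (((n : ℝ) - 1) / ((n : ℝ) - 2))) \ holes n ε (aStar n ε),
    lap ξ x = 0) ∧
  (∀ x, lap ξ x ≤ 0) ∧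
  (∀ i : Fin n, ∀ x, ξ (x + ε • EuclideanSpace.single i 1) = ξ x)

/-- The smooth initial data `g` for (PME_ε): vanishing outside `Ω` and with
nondegenerate gradient on `∂Ω`. -/
def PMEData (n : ℕ) (Ω : Set (Eucl n)) (δ₀ C : ℝ) (g : Eucl n → ℝ) : Prop :=
  ContDiff ℝ (⊤ : ℕ∞) g ∧ HasCompactSupport g ∧ tsupport g ⊆ closure Ω ∧
  ∀ x ∈ frontier Ω, δ₀ < ‖fderiv ℝ g x‖ ∧ ‖fderiv ℝ g x‖ < C

/-- `u` solves the porous medium problem (PME_ε) in the perforated domain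
`Q_{T,a*_ε} = Ω_{a*_ε} × (0,T]`, with lateral boundary value 0 and initial data `gε`. -/
def IsPMESol (n : ℕ) (Ω : Set (Eucl n)) (T ε m : ℝ) (gε : Eucl n → ℝ)
    (u : Eucl n → ℝ → ℝ) : Prop :=
  ContinuousOn (fun pr : Eucl n × ℝ => u pr.1 pr.2)
    (closure (Ω \ holes n ε (aStar n ε)) ×ˢ Icc 0 T) ∧
  (∀ x ∈ Ω \ holes n ε (aStar n ε), ∀ t ∈ Ioc (0:ℝ) T,
    lap (fun y => u y t ^ m) x - deriv (fun s => u x s) t = 0) ∧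
  (∀ x ∈ frontier (Ω \ holes n ε (aStar n ε)), ∀ t ∈ Ioc (0:ℝ) T, u x t = 0) ∧
  (∀ x ∈ Ω \ holes n ε (aStar n ε), u x 0 = gε x)


open Laplacian in
theorem hess_eq_deriv {n : ℕ} {u : Eucl n → ℝ} {x : Eucl n} (h : ContDiffAt ℝ 2 u x) (e : Eucl n) :
    iteratedFDeriv ℝ 2 u x ![e, e] = deriv (deriv fun t : ℝ => u (x + t • e)) 0 := by
  rw [iteratedFDeriv_two_apply]
  have hd : ∀ᶠ y in 𝓝 x, DifferentiableAt ℝ u y := by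
    filter_upwards [h.eventually (by simp)] with y hy using hy.differentiableAt (by simp)
  have hline : ∀ t : ℝ, HasDerivAt (fun t : ℝ => x + t • e) e t := by
    intro t
    simpa using ((hasDerivAt_id t).smul_const e).const_add x
  have hc : Tendsto (fun t : ℝ => x + t • e) (𝓝 0) (𝓝 x) := by
    have := (hline 0).continuousAt.tendsto
    simpa using this
  have h1 : (deriv fun t : ℝ => u (x + t • e)) =ᶠ[𝓝 0] fun t => fderiv ℝ u (x + t • e) e := by
    filter_upwards [hc.eventually hd] with t ht
    exact (ht.hasFDerivAt.comp_hasDerivAt t (hline t)).deriv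
  rw [h1.deriv_eq]
  have h2 : DifferentiableAt ℝ (fderiv ℝ u) x :=
    (h.fderiv_right (m := 1) (by norm_num)).differentiableAt (by simp)
  have h3 : HasDerivAt (fun t : ℝ => fderiv ℝ u (x + t • e)) (fderiv ℝ (fderiv ℝ u) x e) 0 := by
    have h2' : HasFDerivAt (fderiv ℝ u) (fderiv ℝ (fderiv ℝ u) x) (x + (0:ℝ) • e) := by
      simpa using h2.hasFDerivAt
    exact h2'.comp_hasDerivAt 0 (hline 0)
  have h4 := h3.clm_apply (hasDerivAt_const (0:ℝ) e)
  rw [h4.deriv]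
  simp

open Laplacian in
theorem laplacian_eq_sum {n : ℕ} {u : Eucl n → ℝ} {x : Eucl n} :
    Δ u x = ∑ i, iteratedFDeriv ℝ 2 u x
      ![(EuclideanSpace.single i 1 : Eucl n), EuclideanSpace.single i 1] := by
  rw [InnerProductSpace.laplacian_eq_iteratedFDeriv_orthonormalBasis u
    (EuclideanSpace.basisFun (Fin n) ℝ)]
  simp

open Laplacian in
theorem lap_eq {n : ℕ} {u : Eucl n → ℝ} {x : Eucl n} (h : ContDiffAt ℝ 2 u x) :
    lap u x = Δ u x := by
  rw [laplacian_eq_sum]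
  unfold lap
  refine Finset.sum_congr rfl fun i _ => ?_
  rw [iteratedFDeriv_two_apply]
  have h2 : DifferentiableAt ℝ (fderiv ℝ u) x :=
    (h.fderiv_right (m := 1) (by norm_num)).differentiableAt (by simp)
  have h4 := h2.hasFDerivAt.clm_apply (hasFDerivAt_const (EuclideanSpace.single i 1 : Eucl n) x)
  rw [h4.fderiv]
  simp

theorem deriv2_nonpos {g : ℝ → ℝ} (hg : ContinuousAt g 0) (hm : IsLocalMax g 0) :
    deriv (deriv g) 0 ≤ 0 := by
  by_contra! hlt
  have hmin := isLocalMin_of_deriv_deriv_pos hlt hm.deriv_eq_zero hg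
  have hE : g =ᶠ[𝓝 0] fun _ => g 0 := by
    filter_upwards [hm, hmin] with t h1 h2 using le_antisymm h1 h2
  have h1 : deriv g =ᶠ[𝓝 0] deriv (fun _ => g 0) := hE.deriv
  rw [h1.deriv_eq] at hlt
  simp at hlt

open Laplacian in
theorem laplacian_nonpos_of_max {n : ℕ} {u : Eucl n → ℝ} {x : Eucl n} (h : ContDiffAt ℝ 2 u x)
    (hm : IsLocalMax u x) : Δ u x ≤ 0 := by
  rw [laplacian_eq_sum]
  refine Finset.sum_nonpos fun i _ => ?_
  rw [hess_eq_deriv h]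
  have hc : Tendsto (fun t : ℝ => x + t • (EuclideanSpace.single i 1 : Eucl n)) (𝓝 0) (𝓝 x) := by
    have : Continuous (fun t : ℝ => x + t • (EuclideanSpace.single i 1 : Eucl n)) := by fun_prop
    simpa using this.tendsto 0
  apply deriv2_nonpos
  · have h0 : ContinuousAt u (x + (0:ℝ) • (EuclideanSpace.single i 1 : Eucl n)) := by
      simpa using h.continuousAt
    exact ContinuousAt.comp (f := fun t : ℝ => x + t • (EuclideanSpace.single i 1 : Eucl n)) h0
      (by fun_prop)
  · have := hc.eventually hm
    simpa [IsLocalMax, IsMaxFilter] using this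

/-- The weak maximum principle, in pointwise form. -/
theorem max_principle {n : ℕ} {K : Set (Eucl n)} (hK : IsCompact K) {h : Eucl n → ℝ}
    (hc : ContinuousOn h K)
    (hinter : ∀ z ∈ K, 0 < h z → K ∈ 𝓝 z ∧ ContDiffAt ℝ 2 h z ∧ 0 < Laplacian.laplacian h z) :
    ∀ z ∈ K, h z ≤ 0 := by
  intro z hz
  obtain ⟨w, hw, hmax⟩ := hK.exists_isMaxOn ⟨z, hz⟩ hc
  by_contra! hlt
  have hw0 : 0 < h w := hlt.trans_le (hmax hz)
  obtain ⟨h1, h2, h3⟩ := hinter w hw hw0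
  exact absurd (laplacian_nonpos_of_max h2 (hmax.isLocalMax h1)) (not_le.2 h3)

open Laplacian in
/-- Laplacian of a function composed with a linear isometry and translations. -/
theorem laplacian_comp_isom {n : ℕ} {u : Eucl n → ℝ} (L : Eucl n ≃ₗᵢ[ℝ] Eucl n) (c d : Eucl n)
    {x : Eucl n} (h : ContDiffAt ℝ 2 u (L (x - c) + d)) :
    ContDiffAt ℝ 2 (fun z => u (L (z - c) + d)) x ∧
    Δ (fun z => u (L (z - c) + d)) x = Δ u (L (x - c) + d) := by
  have hC : ContDiffAt ℝ 2 (fun z => u (L (z - c) + d)) x := by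
    refine ContDiffAt.comp x h ?_
    have : ContDiff ℝ 2 (fun z => L (z - c) + d) := 
      (L.contDiff.comp (contDiff_id.sub contDiff_const)).add contDiff_const
    exact this.contDiffAt
  refine ⟨hC, ?_⟩
  rw [laplacian_eq_sum, InnerProductSpace.laplacian_eq_iteratedFDeriv_orthonormalBasis u
    ((EuclideanSpace.basisFun (Fin n) ℝ).map L)]
  refine Finset.sum_congr rfl fun i _ => ?_
  rw [hess_eq_deriv hC, hess_eq_deriv h]
  congr 2
  ext t
  simp [add_sub_right_comm, map_add]
  congr 1
  abel

open Laplacian in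
theorem laplacian_radial {n : ℕ} (b q : ℝ) (y x : Eucl n) (hpos : 0 < ‖x - y‖ ^ 2 + b) :
    ContDiffAt ℝ 2 (fun z => (‖z - y‖ ^ 2 + b) ^ (-q)) x ∧
    Δ (fun z => (‖z - y‖ ^ 2 + b) ^ (-q)) x =
      q * (‖x - y‖ ^ 2 + b) ^ (-q - 2) *
        (4 * (q + 1) * ‖x - y‖ ^ 2 - 2 * n * (‖x - y‖ ^ 2 + b)) := by
  have hC : ContDiffAt ℝ 2 (fun z => (‖z - y‖ ^ 2 + b) ^ (-q)) x := by
    refine ContDiffAt.rpow_const_of_ne ?_ hpos.ne'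
    exact (((contDiff_id.sub contDiff_const).norm_sq ℝ).add contDiff_const).contDiffAt
  refine ⟨hC, ?_⟩
  rw [laplacian_eq_sum]
  set s := ‖x - y‖ ^ 2 + b with hs
  have key : ∀ i : Fin n, iteratedFDeriv ℝ 2 (fun z => (‖z - y‖ ^ 2 + b) ^ (-q)) x
      ![(EuclideanSpace.single i 1 : Eucl n), EuclideanSpace.single i 1] =
      4 * q * (q + 1) * s ^ (-q - 2) * ((x - y) i) ^ 2 - 2 * q * s ^ (-q - 1) := by
    intro i
    rw [hess_eq_deriv hC]
    have hfun : (fun t : ℝ => (‖x + t • (EuclideanSpace.single i 1 : Eucl n) - y‖ ^ 2 + b) ^ (-q))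
        = fun t : ℝ => (s + 2 * ((x - y) i) * t + t ^ 2) ^ (-q) := by
      ext t
      congr 1
      have : x + t • (EuclideanSpace.single i 1 : Eucl n) - y =
        (x - y) + t • (EuclideanSpace.single i 1 : Eucl n) := by abel
      rw [this, norm_add_sq_real, inner_smul_right, norm_smul, EuclideanSpace.inner_single_right]
      simp [hs]
      ring
    rw [hfun]
    set α := (x - y) i
    have hp : ∀ t : ℝ, HasDerivAt (fun t : ℝ => s + 2 * α * t + t ^ 2) (2 * α + 2 * t) t := by
      intro t
      have := (((hasDerivAt_id t).const_mul (2 * α)).const_add s).add ((hasDerivAt_id t).pow 2)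
      exact this.congr_deriv (by simp)
    have hev : ∀ᶠ t : ℝ in 𝓝 0, 0 < s + 2 * α * t + t ^ 2 := by
      have : ContinuousAt (fun t : ℝ => s + 2 * α * t + t ^ 2) 0 := (hp 0).continuousAt
      exact this.eventually (lt_mem_nhds (by simpa using hpos))
    have h1 : (deriv fun t : ℝ => (s + 2 * α * t + t ^ 2) ^ (-q)) =ᶠ[𝓝 0]
        fun t => (2 * α + 2 * t) * (-q) * (s + 2 * α * t + t ^ 2) ^ (-q - 1) := by
      filter_upwards [hev] with t ht
      exact ((hp t).rpow_const (Or.inl ht.ne')).deriv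
    rw [h1.deriv_eq]
    have hl : HasDerivAt (fun t : ℝ => (2 * α + 2 * t) * (-q)) (2 * (-q)) 0 := by
      simpa using (((hasDerivAt_id (0:ℝ)).const_mul 2).const_add (2 * α)).mul_const (-q)
    have h0 : s + 2 * α * 0 + 0 ^ 2 ≠ 0 := by simpa using hpos.ne'
    have h2 := hl.mul ((hp 0).rpow_const (p := -q - 1) (Or.inl h0))
    have h3 := h2.deriv
    simp only [mul_zero, add_zero, ne_eq, OfNat.ofNat_ne_zero, not_false_eq_true, zero_pow] at h3
    refine Eq.trans h3 ?_
    rw [show -q - 1 - 1 = -q - 2 by ring]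
    ring
  rw [Finset.sum_congr rfl fun i _ => key i]
  rw [Finset.sum_sub_distrib, ← Finset.mul_sum]
  have hn2 : ∑ i, ((x - y) i) ^ 2 = ‖x - y‖ ^ 2 := by
    rw [EuclideanSpace.norm_sq_eq]; simp
  have hs1 : s ^ (-q - 1) = s ^ (-q - 2) * s := by
    rw [← Real.rpow_add_one hpos.ne']; congr 1; ring
  rw [hn2, hs1]
  simp
  ring


open Laplacian in
theorem laplacian_quad {n : ℕ} (α β γ : ℝ) (c e x : Eucl n) :
    ContDiff ℝ 2 (fun z : Eucl n => α * ‖z - c‖ ^ 2 + β * inner ℝ (z - c) e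
      - γ * (inner ℝ (z - c) e) ^ 2) ∧
    Δ (fun z : Eucl n => α * ‖z - c‖ ^ 2 + β * inner ℝ (z - c) e
      - γ * (inner ℝ (z - c) e) ^ 2) x = 2 * n * α - 2 * γ * ‖e‖ ^ 2 := by
  have hC : ContDiff ℝ 2 (fun z : Eucl n => α * ‖z - c‖ ^ 2 + β * inner ℝ (z - c) e
      - γ * (inner ℝ (z - c) e) ^ 2) := by
    have h1 : ContDiff ℝ 2 (fun z : Eucl n => ‖z - c‖ ^ 2) :=
      (contDiff_id.sub contDiff_const).norm_sq ℝ
    have h2 : ContDiff ℝ 2 (fun z : Eucl n => inner ℝ (z - c) e) :=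
      (contDiff_id.sub contDiff_const).inner ℝ contDiff_const
    exact ((contDiff_const.mul h1).add (contDiff_const.mul h2)).sub (contDiff_const.mul (h2.pow 2))
  refine ⟨hC, ?_⟩
  rw [laplacian_eq_sum]
  have key : ∀ i : Fin n, iteratedFDeriv ℝ 2 (fun z : Eucl n => α * ‖z - c‖ ^ 2 +
      β * inner ℝ (z - c) e - γ * (inner ℝ (z - c) e) ^ 2) x
      ![(EuclideanSpace.single i 1 : Eucl n), EuclideanSpace.single i 1] =
      2 * α - 2 * γ * (e i) ^ 2 := by
    intro i
    rw [hess_eq_deriv hC.contDiffAt]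
    have hfun : (fun t : ℝ => α * ‖x + t • (EuclideanSpace.single i 1 : Eucl n) - c‖ ^ 2 +
      β * inner ℝ (x + t • (EuclideanSpace.single i 1 : Eucl n) - c) e -
      γ * (inner ℝ (x + t • (EuclideanSpace.single i 1 : Eucl n) - c) e) ^ 2)
        = fun t : ℝ => (α * ‖x - c‖ ^ 2 + β * inner ℝ (x - c) e - γ * (inner ℝ (x - c) e) ^ 2)
          + (2 * α * ((x - c) i) + β * e i - 2 * γ * (inner ℝ (x - c) e) * e i) * t
          + (α - γ * (e i) ^ 2) * t ^ 2 := by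
      ext t
      have : x + t • (EuclideanSpace.single i 1 : Eucl n) - c =
        (x - c) + t • (EuclideanSpace.single i 1 : Eucl n) := by abel
      rw [this, norm_add_sq_real, inner_smul_right, norm_smul, EuclideanSpace.inner_single_right,
        inner_add_left, inner_smul_left, EuclideanSpace.inner_single_left]
      simp
      ring
    rw [hfun]
    generalize (α * ‖x - c‖ ^ 2 + β * inner ℝ (x - c) e - γ * (inner ℝ (x - c) e) ^ 2) = A0
    generalize (2 * α * ((x - c) i) + β * e i - 2 * γ * (inner ℝ (x - c) e) * e i) = A1
    have h1 : (deriv fun t : ℝ => A0 + A1 * t + (α - γ * (e i) ^ 2) * t ^ 2) =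
        fun t => A1 + (α - γ * (e i) ^ 2) * (2 * t) := by
      ext t
      have := (((hasDerivAt_id t).const_mul A1).const_add A0).add
        (((hasDerivAt_id t).pow 2).const_mul (α - γ * (e i) ^ 2))
      refine Eq.trans this.deriv ?_
      simp
    rw [h1]
    have := (((hasDerivAt_id (0:ℝ)).const_mul 2).const_mul (α - γ * (e i) ^ 2)).const_add A1
    refine Eq.trans this.deriv ?_
    simp
    ring
  rw [Finset.sum_congr rfl fun i _ => key i]
  rw [Finset.sum_sub_distrib, ← Finset.mul_sum, ← Finset.mul_sum]
  have hn2 : ∑ i, (e i) ^ 2 = ‖e‖ ^ 2 := by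
    rw [EuclideanSpace.norm_sq_eq]; simp
  rw [hn2]
  simp
  ring

theorem ev_nonneg {n : ℕ} {Ω : Set (Eucl n)} {ε a p : ℝ} {φ : Eucl n → ℝ}
    (h : IsEVSol n Ω ε a p φ) (x : Eucl n) : 0 ≤ φ x := by
  by_cases hx : x ∈ Ω \ holes n ε a
  · exact (h.2.2.2.1 x hx).le
  · exact (h.2.2.2.2 x hx).ge

theorem ev_point {n : ℕ} {Ω : Set (Eucl n)} (hΩ : IsOpen Ω) {ε a p : ℝ} {φ : Eucl n → ℝ}
    (h : IsEVSol n Ω ε a p φ) {x : Eucl n} (hx : 0 < φ x) :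
    x ∈ Ω ∧ x ∉ holes n ε a ∧ ContDiffAt ℝ 2 φ x ∧ Laplacian.laplacian φ x = - φ x ^ p := by
  have hmem : x ∈ Ω \ holes n ε a := by
    by_contra hc
    exact hx.ne' (h.2.2.2.2 x hc)
  have hcont : ContinuousAt φ x :=
    (h.1.mono subset_closure).continuousAt (hΩ.mem_nhds hmem.1)
  have hN : Ω \ holes n ε a ∈ 𝓝 x := by
    filter_upwards [hcont.eventually (lt_mem_nhds hx)] with y hy
    by_contra hc
    exact hy.ne' (h.2.2.2.2 y hc)
  have hC := h.2.1.contDiffAt hN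
  refine ⟨hmem.1, hmem.2, hC, ?_⟩
  have := h.2.2.1 x hmem
  rw [lap_eq hC] at this
  linarith

theorem ev_bound {n : ℕ} (hn : 3 ≤ n) {Ω : Set (Eucl n)} (hΩ : IsOpen Ω) {ε a p : ℝ}
    (hp0 : 0 < p) (hp1 : p < 1) {φ : Eucl n → ℝ}
    (h : IsEVSol n Ω ε a p φ) {x0 : Eucl n} {D : ℝ} (hD : Ω ⊆ closedBall x0 D) (x : Eucl n) :
    φ x ≤ (D ^ 2) ^ (1 / (1 - p)) := by
  by_cases hx : 0 < φ x
  swap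
  · exact (not_lt.1 hx).trans (Real.rpow_nonneg (sq_nonneg _) _)
  have hcl : closure Ω ⊆ closedBall x0 D := closure_minimal hD isClosed_closedBall
  have hK : IsCompact (closure Ω) :=
    (isCompact_closedBall x0 D).of_isClosed_subset isClosed_closure hcl
  have hxm : x ∈ closure Ω := subset_closure (ev_point hΩ h hx).1
  obtain ⟨w, hw, hmax⟩ := hK.exists_isMaxOn ⟨x, hxm⟩ h.1
  set S := φ w with hS
  have hS0 : 0 < S := hx.trans_le (hmax hxm)
  have hSp : 0 < S ^ p := Real.rpow_pos_of_pos hS0 p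
  have hmp := max_principle hK (h := fun z => φ z - (S ^ p * D ^ 2 + ((-S ^ p) * ‖z - x0‖ ^ 2 + 0 * inner ℝ (z - x0) 0
      - 0 * (inner ℝ (z - x0) 0) ^ 2))) (by
    refine h.1.sub (Continuous.continuousOn ?_)
    exact continuous_const.add (laplacian_quad (-S ^ p) 0 0 x0 0 x).1.continuous) (by
    intro z hz hpos
    have hzD : ‖z - x0‖ ≤ D := by simpa [dist_eq_norm] using hcl hz
    have hsq : ‖z - x0‖ ^ 2 ≤ D ^ 2 := by gcongr
    have hφz : 0 < φ z := by
      simp only [zero_mul, add_zero, sub_zero] at hpos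
      nlinarith
    obtain ⟨h1, h2, h3, h4⟩ := ev_point hΩ h hφz
    have hq := laplacian_quad (-S ^ p) 0 0 x0 0 z
    have hq2 : ContDiffAt ℝ 2 (fun z => (S ^ p * D ^ 2 + ((-S ^ p) * ‖z - x0‖ ^ 2 + 0 * inner ℝ (z - x0) 0
      - 0 * (inner ℝ (z - x0) 0) ^ 2))) z := contDiffAt_const.add hq.1.contDiffAt
    refine ⟨mem_of_superset (hΩ.mem_nhds h1) subset_closure, h3.sub hq2, ?_⟩
    have e1 := ContDiffAt.laplacian_sub h3 hq2
    have e2 := ContDiffAt.laplacian_add (contDiffAt_const (c := S ^ p * D ^ 2)) hq.1.contDiffAt (x := z)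
    rw [InnerProductSpace.laplacian_const] at e2
    have e3 := hq.2
    refine lt_of_lt_of_eq ?_ e1.symm
    refine lt_of_lt_of_eq ?_ (congrArg (fun t => _ - t) e2.symm)
    rw [h4]
    simp only [Pi.zero_apply, zero_add]
    rw [e3]
    have : φ z ^ p ≤ S ^ p := Real.rpow_le_rpow hφz.le (hmax hz) hp0.le
    have hn' : (3:ℝ) ≤ n := by exact_mod_cast hn
    nlinarith)
  have hfin := hmp w hw
  simp only [zero_mul, add_zero, sub_zero] at hfin
  have h5 : S ≤ S ^ p * D ^ 2 := by nlinarith [sq_nonneg ‖w - x0‖]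
  have h6 : S ^ (1 - p) ≤ D ^ 2 := by
    rw [Real.rpow_sub hS0, Real.rpow_one, div_le_iff₀ hSp]
    linarith
  have h7 : S ≤ (D ^ 2) ^ (1 / (1 - p)) := by
    calc S = (S ^ (1 - p)) ^ (1 / (1 - p)) := by
          rw [← Real.rpow_mul hS0.le, mul_one_div_cancel (by linarith), Real.rpow_one]
      _ ≤ _ := by
          refine Real.rpow_le_rpow (Real.rpow_nonneg hS0.le _) h6 ?_
          exact one_div_nonneg.2 (by linarith)
  exact (hmax hxm).trans h7

theorem ev_boundary {n : ℕ} (hn : 3 ≤ n) {Ω : Set (Eucl n)} (hΩ : IsOpen Ω) {ε a p : ℝ}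
    (hp0 : 0 < p) {φ : Eucl n → ℝ}
    (h : IsEVSol n Ω ε a p φ) {M ρ D : ℝ} (hM : ∀ x, φ x ≤ M) (hρ : 0 < ρ) (hD0 : 0 < D)
    {y0 ξ : Eucl n}
    (hD : Ω ⊆ closedBall y0 D) (hout : ∀ z ∈ Ω, ρ ≤ ‖z - y0‖) (hξ : ‖ξ - y0‖ = ρ)
    {A : ℝ} (hA : (M ^ p + 1) * (D ^ 2) ^ ((n:ℝ) + 1) / (ρ ^ 2) ^ (n:ℝ) = A) (x : Eucl n) (hx : x ∈ Ω) :
    φ x ≤ A * n * (D + ρ) / ρ ^ 2 * ‖x - ξ‖ := by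
  have hM0 : 0 ≤ M := (ev_nonneg h x).trans (hM x)
  have hMp : 0 ≤ M ^ p := Real.rpow_nonneg hM0 p
  have hn' : (3:ℝ) ≤ n := by exact_mod_cast hn
  have hρn : 0 < (ρ ^ 2) ^ (n:ℝ) := Real.rpow_pos_of_pos (by positivity) _
  have hDn : 0 < (D ^ 2) ^ ((n:ℝ) + 1) := Real.rpow_pos_of_pos (by positivity) _
  have hA0 : 0 < A := by rw [← hA]; positivity
  have hcl : closure Ω ⊆ closedBall y0 D := closure_minimal hD isClosed_closedBall
  have hcl2 : ∀ z ∈ closure Ω, ρ ≤ ‖z - y0‖ := by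
    have hc : IsClosed {z : Eucl n | ρ ≤ ‖z - y0‖} :=
      isClosed_le continuous_const (by fun_prop)
    exact fun z hz => closure_minimal (s := Ω) hout hc hz
  have hK : IsCompact (closure Ω) :=
    (isCompact_closedBall y0 D).of_isClosed_subset isClosed_closure hcl
  set B := A * (ρ ^ 2) ^ (n:ℝ) with hB
  have hB0 : 0 < B := by positivity
  have hs0 : ∀ z ∈ closure Ω, 0 < ‖z - y0‖ ^ 2 + 0 := fun z hz => by
    have := hcl2 z hz
    have : 0 < ‖z - y0‖ := by linarith
    positivity
  have hle : ∀ z ∈ closure Ω, B * (‖z - y0‖ ^ 2 + 0) ^ (-(n:ℝ)) ≤ A := fun z hz => by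
    have h1 : (ρ ^ 2) ^ (n:ℝ) ≤ (‖z - y0‖ ^ 2 + 0) ^ (n:ℝ) := by
      refine Real.rpow_le_rpow (by positivity) ?_ (by linarith)
      have := hcl2 z hz
      rw [add_zero]
      gcongr
    rw [Real.rpow_neg (hs0 z hz).le, hB, mul_assoc]
    refine mul_le_of_le_one_right hA0.le ?_
    rw [← div_eq_mul_inv, div_le_one (hρn.trans_le h1)]
    exact h1
  have hmp := max_principle hK (h := fun z => φ z - (A - B • (‖z - y0‖ ^ 2 + 0) ^ (-(n:ℝ)))) (by
    refine h.1.sub (continuousOn_const.sub (ContinuousOn.const_smul ?_ B))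
    refine ContinuousOn.rpow_const (by fun_prop) fun z hz => Or.inl (hs0 z hz).ne') (by
    intro z hz hpos
    have hφz : 0 < φ z := by
      have := hle z hz
      simp only [smul_eq_mul] at hpos
      linarith
    obtain ⟨h1, h2, h3, h4⟩ := ev_point hΩ h hφz
    have hq := laplacian_radial 0 n y0 z (hs0 z hz)
    have hq1 : ContDiffAt ℝ 2 (B • fun z => (‖z - y0‖ ^ 2 + 0) ^ (-(n:ℝ))) z :=
      hq.1.const_smul B
    have hq2 : ContDiffAt ℝ 2 ((fun _ => A) - B • fun z => (‖z - y0‖ ^ 2 + 0) ^ (-(n:ℝ))) z :=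
      contDiffAt_const.sub hq1
    refine ⟨mem_of_superset (hΩ.mem_nhds h1) subset_closure, h3.sub hq2, ?_⟩
    have e1 := ContDiffAt.laplacian_sub h3 hq2
    have e2 := ContDiffAt.laplacian_sub (contDiffAt_const (c := A)) hq1
    have e3 := InnerProductSpace.laplacian_smul B hq.1
    rw [InnerProductSpace.laplacian_const] at e2
    refine lt_of_lt_of_eq ?_ e1.symm
    rw [e2, e3, hq.2, h4]
    simp only [Pi.zero_apply, smul_eq_mul]
    have : φ z ^ p ≤ M ^ p := Real.rpow_le_rpow hφz.le (hM z) hp0.le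
    have hzD : ‖z - y0‖ ≤ D := by simpa [dist_eq_norm] using hcl hz
    have hsD : ‖z - y0‖ ^ 2 + 0 ≤ D ^ 2 := by rw [add_zero]; gcongr
    set s := ‖z - y0‖ ^ 2 + 0 with hs
    have hspos : 0 < s := hs0 z hz
    have hss : ‖z - y0‖ ^ 2 = s := by rw [hs, add_zero]
    rw [hss]
    have hs1 : s ^ (-(n:ℝ) - 2) * s = s ^ (-((n:ℝ) + 1)) := by
      rw [← Real.rpow_add_one hspos.ne']; congr 1; ring
    have hcal : (n:ℝ) * s ^ (-(n:ℝ) - 2) * (4 * ((n:ℝ) + 1) * s - 2 * n * s) =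
        (n * (2 * n + 4)) * s ^ (-((n:ℝ) + 1)) := by
      rw [← hs1]; ring
    rw [hcal]
    have hs2 : (D ^ 2) ^ (-((n:ℝ) + 1)) ≤ s ^ (-((n:ℝ) + 1)) :=
      Real.rpow_le_rpow_of_nonpos hspos hsD (by linarith)
    have hs3 : B * (D ^ 2) ^ (-((n:ℝ) + 1)) = M ^ p + 1 := by
      rw [Real.rpow_neg (by positivity), hB, ← hA]
      field_simp
    have hs4 : M ^ p + 1 ≤ B * s ^ (-((n:ℝ) + 1)) := by
      rw [← hs3]; gcongr
    have hs5 : (1:ℝ) ≤ n * (2 * n + 4) := by nlinarith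
    have hs6 : B * s ^ (-((n:ℝ) + 1)) ≤ B * ((n * (2 * n + 4)) * s ^ (-((n:ℝ) + 1))) := by
      have : 0 < s ^ (-((n:ℝ) + 1)) := Real.rpow_pos_of_pos hspos _
      have h8 : 0 < B * s ^ (-((n:ℝ) + 1)) := by positivity
      nlinarith
    linarith)
  have hfin := hmp x (subset_closure hx)
  have hxρ := hout x hx
  have hxD : ‖x - y0‖ ≤ D := by simpa [dist_eq_norm] using hD hx
  simp only [smul_eq_mul, add_zero] at hfin
  have h1 : B * (‖x - y0‖ ^ 2) ^ (-(n:ℝ)) = A * (ρ ^ 2 / ‖x - y0‖ ^ 2) ^ n := by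
    rw [hB, Real.rpow_neg (by positivity), Real.rpow_natCast, Real.rpow_natCast, div_pow]
    field_simp
  rw [h1] at hfin
  have hx0 : 0 < ‖x - y0‖ := by linarith
  have h2 : 1 + (n:ℝ) * (ρ ^ 2 / ‖x - y0‖ ^ 2 - 1) ≤ (ρ ^ 2 / ‖x - y0‖ ^ 2) ^ n := by
    have := one_add_mul_le_pow (a := ρ ^ 2 / ‖x - y0‖ ^ 2 - 1) (by
      have : 0 ≤ ρ ^ 2 / ‖x - y0‖ ^ 2 := by positivity
      linarith) n
    simpa using this
  have h3 : ‖x - y0‖ ≤ ‖x - ξ‖ + ρ := by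
    rw [← hξ]; simpa using norm_add_le (x - ξ) (ξ - y0)
  have h4 : 1 - ρ ^ 2 / ‖x - y0‖ ^ 2 ≤ (D + ρ) / ρ ^ 2 * ‖x - ξ‖ := by
    have e : 1 - ρ ^ 2 / ‖x - y0‖ ^ 2 = (‖x - y0‖ - ρ) * (‖x - y0‖ + ρ) / ‖x - y0‖ ^ 2 := by
      field_simp; ring
    rw [e]
    have hnn : 0 ≤ ‖x - y0‖ - ρ := by linarith
    calc (‖x - y0‖ - ρ) * (‖x - y0‖ + ρ) / ‖x - y0‖ ^ 2 
        ≤ ‖x - ξ‖ * (D + ρ) / ρ ^ 2 := by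
          gcongr
          linarith
      _ = _ := by ring
  calc φ x ≤ A * (1 - (ρ ^ 2 / ‖x - y0‖ ^ 2) ^ n) := by linarith
    _ ≤ A * (n * (1 - ρ ^ 2 / ‖x - y0‖ ^ 2)) := by gcongr; linarith
    _ ≤ A * (n * ((D + ρ) / ρ ^ 2 * ‖x - ξ‖)) := by gcongr
    _ = _ := by ring


theorem exterior_ball {n : ℕ} {Ω : Set (Eucl n)} (hΩo : IsOpen Ω) (hΩb : Bornology.IsBounded Ω)
    (hΩs : HasSmoothBoundary Ω) :
    ∃ ρ : ℝ, 0 < ρ ∧ ∀ ξ ∈ frontier Ω, ∃ y0 : Eucl n, ‖ξ - y0‖ = ρ ∧ ∀ z ∈ Ω, ρ ≤ ‖z - y0‖ := by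
  obtain ⟨f, hf, hΩf, hgrad⟩ := hΩs
  rcases (frontier Ω).eq_empty_or_nonempty with hE | hne
  · exact ⟨1, one_pos, by simp [hE]⟩
  have hcb : Bornology.IsBounded (closure Ω) := hΩb.closure
  have hFc : IsCompact (frontier Ω) :=
    Metric.isCompact_of_isClosed_isBounded isClosed_frontier (hcb.subset frontier_subset_closure)
  have hf1 : ContDiff ℝ 1 (fderiv ℝ f) := hf.fderiv_right (m := 1) (by norm_cast)
  obtain ⟨ξ0, hξ0, hmin⟩ := hFc.exists_isMinOn hne (hf1.continuous.norm.continuousOn)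
  set c := ‖fderiv ℝ f ξ0‖ with hc
  have hc0 : 0 < c := norm_pos_iff.2 (hgrad ξ0 hξ0)
  obtain ⟨R, hR⟩ := hcb.subset_closedBall (0 : Eucl n)
  obtain ⟨H, hH⟩ := (isCompact_closedBall (0 : Eucl n) R).exists_bound_of_continuousOn
    (hf1.continuous_fderiv (by simp)).continuousOn
  set H1 := max H 0 + 1 with hH1
  have hH1p : 0 < H1 := by positivity
  have hlip : ∀ a ∈ closedBall (0 : Eucl n) R, ∀ b ∈ closedBall (0 : Eucl n) R,
      ‖fderiv ℝ f b - fderiv ℝ f a‖ ≤ H1 * ‖b - a‖ := by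
    intro a ha b hb
    refine (convex_closedBall (0 : Eucl n) R).norm_image_sub_le_of_norm_fderiv_le
      (fun x _ => (hf1.differentiable (by simp)) x) (fun x hx => ?_) ha hb
    exact (hH x hx).trans (by rw [hH1]; linarith [le_max_left H 0])
  refine ⟨c / (2 * H1), by positivity, fun ξ hξ => ?_⟩
  set ρ := c / (2 * H1) with hρ
  have hρ0 : 0 < ρ := by positivity
  have hξW : ξ ∈ closedBall (0 : Eucl n) R := hR (frontier_subset_closure hξ)
  set v := (InnerProductSpace.toDual ℝ (Eucl n)).symm (fderiv ℝ f ξ) with hv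
  have hvn : ‖v‖ = ‖fderiv ℝ f ξ‖ := by rw [hv, LinearIsometryEquiv.norm_map]
  have hvc : c ≤ ‖v‖ := by rw [hvn]; exact hmin hξ
  have hv0 : 0 < ‖v‖ := hc0.trans_le hvc
  have hvi : ∀ w, fderiv ℝ f ξ w = inner ℝ v w := fun w => by
    rw [hv, InnerProductSpace.toDual_symm_apply]
  refine ⟨ξ + (ρ / ‖v‖) • v, ?_, fun z hz => ?_⟩
  · rw [show ξ - (ξ + (ρ / ‖v‖) • v) = -((ρ / ‖v‖) • v) by abel, norm_neg, norm_smul]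
    rw [Real.norm_of_nonneg (by positivity)]
    field_simp
  · by_contra! hlt
    have hzW : z ∈ closedBall (0 : Eucl n) R := hR (subset_closure hz)
    have hfz : f z < 0 := by rw [hΩf] at hz; exact hz
    have hfξ : 0 ≤ f ξ := by
      have : ξ ∉ Ω := by
        rw [hΩo.frontier_eq] at hξ; exact hξ.2
      rw [hΩf] at this
      simpa using this
    have htay : ‖f z - f ξ - (fderiv ℝ f ξ) (z - ξ)‖ ≤ (H1 * ‖z - ξ‖) * ‖z - ξ‖ := by
      have hseg : segment ℝ ξ z ⊆ closedBall (0 : Eucl n) R :=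
        (convex_closedBall _ _).segment_subset hξW hzW
      refine (convex_segment ξ z).norm_image_sub_le_of_norm_fderiv_le' (f := f)
        (fun x _ => (hf.differentiable (by simp)) x) (fun x hx => ?_)
        (left_mem_segment ℝ ξ z) (right_mem_segment ℝ ξ z)
      refine (hlip ξ hξW x (hseg hx)).trans ?_
      gcongr
      have hcv := (convex_closedBall ξ ‖z - ξ‖).segment_subset
        (mem_closedBall_self (norm_nonneg _)) (by simp [dist_eq_norm] : z ∈ _) hx
      simpa [dist_eq_norm] using hcv
    rw [hvi] at htay
    have h1 : ‖z - (ξ + (ρ / ‖v‖) • v)‖ ^ 2 = ‖z - ξ‖ ^ 2 - 2 * (ρ / ‖v‖) * inner ℝ v (z - ξ) + ρ ^ 2 := by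
      rw [← sub_sub, norm_sub_sq_real, inner_smul_right, norm_smul,
        Real.norm_of_nonneg (by positivity), real_inner_comm]
      field_simp
    have h2 : ‖z - (ξ + (ρ / ‖v‖) • v)‖ ^ 2 < ρ ^ 2 := by gcongr
    have h3 : ‖z - ξ‖ ^ 2 < 2 * (ρ / ‖v‖) * inner ℝ v (z - ξ) := by linarith
    have h4 : 0 < inner ℝ v (z - ξ) := by
      have : 0 < 2 * (ρ / ‖v‖) := by positivity
      by_contra! hneg
      nlinarith [sq_nonneg ‖z - ξ‖]
    have h5 := (abs_le.1 (by simpa [Real.norm_eq_abs] using htay)).1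
    have h6 : H1 * (2 * (ρ / ‖v‖)) ≤ 1 := by
      have : H1 * (2 * (ρ / ‖v‖)) = c / ‖v‖ := by rw [hρ]; field_simp
      rw [this, div_le_one hv0]; exact hvc
    have h7 : H1 * ‖z - ξ‖ ^ 2 ≤ inner ℝ v (z - ξ) := by
      calc H1 * ‖z - ξ‖ ^ 2 ≤ H1 * (2 * (ρ / ‖v‖) * inner ℝ v (z - ξ)) := by gcongr
        _ = (H1 * (2 * (ρ / ‖v‖))) * inner ℝ v (z - ξ) := by ring
        _ ≤ 1 * inner ℝ v (z - ξ) := by gcongr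
        _ = _ := one_mul _
    nlinarith

/-- The lattice vector with integer coordinates `k`. -/
def latVec {n : ℕ} (ε : ℝ) (k : Fin n → ℤ) : Eucl n := WithLp.toLp 2 (fun i => ε * (k i : ℝ))

open Laplacian in
theorem sum_superharmonic {n : ℕ} {ι : Type*} (s : Finset ι) (g : ι → Eucl n → ℝ) (x : Eucl n)
    (h : ∀ k ∈ s, ContDiffAt ℝ 2 (g k) x ∧ Δ (g k) x ≤ 0) :
    ContDiffAt ℝ 2 (∑ k ∈ s, g k) x ∧ Δ (∑ k ∈ s, g k) x ≤ 0 := by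
  classical
  induction s using Finset.induction_on with
  | empty =>
    have : (0 : Eucl n → ℝ) = fun _ => 0 := rfl
    simp only [Finset.sum_empty, this, InnerProductSpace.laplacian_const]
    exact ⟨contDiffAt_const, le_rfl⟩
  | insert k s hk ih =>
    rw [Finset.sum_insert hk]
    have h1 := h k (Finset.mem_insert_self k s)
    have h2 := ih fun j hj => h j (Finset.mem_insert_of_mem hj)
    refine ⟨h1.1.add h2.1, ?_⟩
    rw [ContDiffAt.laplacian_add h1.1 h2.1]
    linarith [h1.2, h2.2]

open Laplacian in
theorem bubble_superharmonic {n : ℕ} (hn : 3 ≤ n) {a M : ℝ} (ha : 0 < a) (hM : 0 ≤ M)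
    (y x : Eucl n) :
    ContDiffAt ℝ 2 ((M * (2 * a ^ 2) ^ (((n:ℝ) - 2) / 2)) •
      fun z => (‖z - y‖ ^ 2 + a ^ 2) ^ (-(((n:ℝ) - 2) / 2))) x ∧
    Δ ((M * (2 * a ^ 2) ^ (((n:ℝ) - 2) / 2)) •
      fun z => (‖z - y‖ ^ 2 + a ^ 2) ^ (-(((n:ℝ) - 2) / 2))) x ≤ 0 := by
  have hn' : (3:ℝ) ≤ n := by exact_mod_cast hn
  have hpos : 0 < ‖x - y‖ ^ 2 + a ^ 2 := by positivity
  obtain ⟨h1, h2⟩ := laplacian_radial (a ^ 2) (((n:ℝ) - 2) / 2) y x hpos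
  refine ⟨h1.const_smul (M * (2 * a ^ 2) ^ (((n:ℝ) - 2) / 2)), ?_⟩
  rw [InnerProductSpace.laplacian_smul _ h1, h2, smul_eq_mul]
  have e : (4 * (((n:ℝ) - 2) / 2 + 1) * ‖x - y‖ ^ 2 - 2 * n * (‖x - y‖ ^ 2 + a ^ 2)) =
    -(2 * n * a ^ 2) := by ring
  rw [e]
  have hq : 0 ≤ ((n:ℝ) - 2) / 2 := by linarith
  have : 0 ≤ (M * (2 * a ^ 2) ^ (((n:ℝ) - 2) / 2)) * ((((n:ℝ) - 2) / 2) *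
    (‖x - y‖ ^ 2 + a ^ 2) ^ (-(((n:ℝ) - 2) / 2) - 2) * (2 * n * a ^ 2)) := by positivity
  linarith

theorem bubble_ge {n : ℕ} (hn : 3 ≤ n) {a : ℝ} (ha : 0 < a) {s : ℝ} (hs0 : 0 ≤ s) (hs : s ≤ a) :
    1 ≤ (2 * a ^ 2) ^ (((n:ℝ) - 2) / 2) * (s ^ 2 + a ^ 2) ^ (-(((n:ℝ) - 2) / 2)) := by
  have hn' : (3:ℝ) ≤ n := by exact_mod_cast hn
  have h1 : 0 < s ^ 2 + a ^ 2 := by positivity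
  rw [Real.rpow_neg h1.le, ← div_eq_mul_inv, one_le_div (Real.rpow_pos_of_pos h1 _)]
  refine Real.rpow_le_rpow h1.le ?_ (by linarith)
  nlinarith


theorem ev_reflect {n : ℕ} (hn : 3 ≤ n) {Ω : Set (Eucl n)} (hΩ : IsOpen Ω) {ε a p : ℝ}
    (hp0 : 0 < p) {φ : Eucl n → ℝ} (h : IsEVSol n Ω ε a p φ) {M r : ℝ} (hM : ∀ x, φ x ≤ M)
    (hε : 0 < ε) (ha : 0 < a) (haε : a ≤ ε) {m x y : Eucl n} (hm : m ∈ latticePts n ε)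
    (hx : ‖x - m‖ < ε / 2) (hy : ‖y - m‖ < ε / 2) (hxy : x ≠ y) (hr : ε ≤ r)
    (hball : closedBall (midpoint ℝ x y) r ⊆ Ω) {N : ℤ} (hN : r + 2 * ε ≤ N * ε) :
    φ x - φ y ≤ M / r ^ 2 * ε ^ 2 + (n * (M / r ^ 2) + M ^ p + 1) * r * ε +
      ∑ k ∈ Fintype.piFinset (fun _ : Fin n => Finset.Icc (-N) N),
        M * (2 * a ^ 2) ^ (((n:ℝ) - 2) / 2) *
          (‖y - (m + latVec ε k)‖ ^ 2 + a ^ 2) ^ (-(((n:ℝ) - 2) / 2)) := by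
  have hr0 : 0 < r := by linarith
  have hM0 : 0 ≤ M := (ev_nonneg h x).trans (hM x)
  have hMp : 0 ≤ M ^ p := Real.rpow_nonneg hM0 p
  set c := midpoint ℝ x y with hc
  set d := ‖x - y‖ with hd
  have hd0 : 0 < d := norm_pos_iff.2 (sub_ne_zero.2 hxy)
  have hdε : d < ε := by
    have : d ≤ ‖x - m‖ + ‖y - m‖ := by
      rw [hd, show x - y = (x - m) - (y - m) by abel]; exact norm_sub_le _ _
    linarith
  set e : Eucl n := (1 / d) • (x - y) with he
  have hen : ‖e‖ = 1 := by
    rw [he, norm_smul, Real.norm_of_nonneg (by positivity), ← hd]; field_simp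
  have hxc : x - c = (1 / 2 : ℝ) • (x - y) := by
    rw [hc]; simp [midpoint_eq_smul_add]; module
  have hyc : y - c = -((1 / 2 : ℝ) • (x - y)) := by
    rw [hc]; simp [midpoint_eq_smul_add]; module
  have hxcn : ‖x - c‖ = d / 2 := by
    rw [hxc, norm_smul, ← hd, Real.norm_of_nonneg (by positivity)]; ring
  have hxce : inner ℝ (x - c) e = d / 2 := by
    rw [hxc, he, inner_smul_left, inner_smul_right, real_inner_self_eq_norm_sq, ← hd]
    simp; field_simp
  have hcm : ‖c - m‖ ≤ ε / 2 := by
    have : c - m = (1 / 2 : ℝ) • ((x - m) + (y - m)) := by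
      rw [hc]; simp [midpoint_eq_smul_add]; module
    rw [this, norm_smul, Real.norm_of_nonneg (by positivity)]
    have := norm_add_le (x - m) (y - m)
    linarith
  set L := (ℝ ∙ (x - y))ᗮ.reflection with hL
  have hLL : ∀ w, L (L w) = w := fun w => Submodule.reflection_reflection _ w
  have hLx : L (x - c) + c = y := by
    have : L (x - y) = -(x - y) := Submodule.reflection_orthogonalComplement_singleton_eq_neg _
    rw [hxc, map_smul, this, smul_neg, ← hyc]
    abel
  have hLfix : ∀ z, inner ℝ (z - c) e = 0 → L (z - c) + c = z := by
    intro z hz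
    have : z - c ∈ (ℝ ∙ (x - y))ᗮ := by
      rw [Submodule.mem_orthogonal_singleton_iff_inner_left]
      rw [he, inner_smul_right] at hz
      have h1 : (1 / d) ≠ 0 := by positivity
      exact (mul_eq_zero.1 hz).resolve_left h1
    rw [hL, Submodule.reflection_mem_subspace_eq_self this]
    abel
  have hLn : ∀ z, ‖L (z - c) + c - c‖ = ‖z - c‖ := fun z => by
    rw [add_sub_cancel_right, L.norm_map]
  have hLd : ∀ z w, ‖z - (L (w - c) + c)‖ = ‖L (z - c) + c - w‖ := by
    intro z w
    rw [← L.norm_map (z - (L (w - c) + c))]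
    congr 1
    rw [show z - (L (w - c) + c) = (z - c) - L (w - c) by abel, map_sub, hLL]
    abel
  set α := M / r ^ 2 with hα
  have hα0 : 0 ≤ α := by positivity
  set γ := n * α + M ^ p + 1 with hγ
  have hγ0 : 0 ≤ γ := by positivity
  set Q : Eucl n → ℝ := fun z => α * ‖z - c‖ ^ 2 + (γ * r) * inner ℝ (z - c) e
      - γ * (inner ℝ (z - c) e) ^ 2 with hQ
  set q := ((n:ℝ) - 2) / 2 with hq
  set S : Finset (Fin n → ℤ) := Fintype.piFinset (fun _ : Fin n => Finset.Icc (-N) N) with hS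
  set G : (Fin n → ℤ) → Eucl n → ℝ := fun k => (M * (2 * a ^ 2) ^ q) •
      fun z => (‖z - (L ((m + latVec ε k) - c) + c)‖ ^ 2 + a ^ 2) ^ (-q) with hG
  have hG0 : ∀ k z, 0 ≤ G k z := fun k z => by
    simp only [hG, Pi.smul_apply, smul_eq_mul]; positivity
  have hGs : ∀ z, ContDiffAt ℝ 2 (∑ k ∈ S, G k) z ∧ Laplacian.laplacian (∑ k ∈ S, G k) z ≤ 0 :=
    fun z => sum_superharmonic S G z fun k _ => bubble_superharmonic hn ha hM0 _ z
  have hGsum : ∀ z, 0 ≤ (∑ k ∈ S, G k) z := fun z => by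
    rw [Finset.sum_apply]; exact Finset.sum_nonneg fun k _ => hG0 k z
  have hQl := fun z => laplacian_quad α (γ * r) γ c e z
  set K : Set (Eucl n) := closedBall c r ∩ {z | 0 ≤ inner ℝ (z - c) e} with hKdef
  have hK : IsCompact K := (isCompact_closedBall c r).inter_right
    (isClosed_le continuous_const (by fun_prop))
  have hKmem : ∀ z ∈ K, ‖z - c‖ ≤ r ∧ 0 ≤ inner ℝ (z - c) e ∧ inner ℝ (z - c) e ≤ r := by
    intro z hz
    have h1 : ‖z - c‖ ≤ r := by simpa [dist_eq_norm] using hz.1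
    refine ⟨h1, hz.2, ?_⟩
    have := real_inner_le_norm (z - c) e
    rw [hen] at this
    linarith
  have hQ0 : ∀ z ∈ K, α * ‖z - c‖ ^ 2 ≤ Q z := by
    intro z hz
    obtain ⟨h1, h2, h3⟩ := hKmem z hz
    have : 0 ≤ γ * (inner ℝ (z - c) e * (r - inner ℝ (z - c) e)) :=
      mul_nonneg hγ0 (mul_nonneg h2 (by linarith))
    simp only [hQ]
    linarith
  have hRball : ∀ z ∈ K, L (z - c) + c ∈ closedBall c r := by
    intro z hz
    rw [mem_closedBall, dist_eq_norm, hLn]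
    exact (hKmem z hz).1
  have hφc : ContinuousOn φ Ω := h.1.mono subset_closure
  have hQc : ContDiff ℝ 2 Q := (hQl 0).1
  have hmp := max_principle hK
    (h := (φ - fun z => φ (L (z - c) + c)) - (Q + ∑ k ∈ S, G k)) (by
    refine ContinuousOn.sub (ContinuousOn.sub ?_ ?_) (ContinuousOn.add ?_ ?_)
    · exact hφc.mono fun z hz => hball hz.1
    · refine hφc.comp (f := fun z => L (z - c) + c) ?_ fun z hz => hball (hRball z hz)
      have : Continuous (fun z => L (z - c) + c) := by fun_prop
      exact this.continuousOn
    · exact hQc.continuous.continuousOn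
    · exact fun z _ => (hGs z).1.continuousAt.continuousWithinAt) (by
    intro z hz hpos
    obtain ⟨h1, h2, h3⟩ := hKmem z hz
    simp only [Pi.sub_apply, Pi.add_apply] at hpos
    have hQz := hQ0 z hz
    have hQz0 : 0 ≤ Q z := le_trans (by positivity) hQz
    have hGz := hGsum z
    have hRz0 := ev_nonneg h (L (z - c) + c)
    have hφz : 0 < φ z := by linarith
    have hnR : φ z ≤ M := hM z
    have hlt1 : ‖z - c‖ < r := by
      refine lt_of_le_of_ne h1 fun heq => ?_
      rw [heq] at hQz
      have : α * r ^ 2 = M := by rw [hα]; field_simp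
      linarith
    have hlt2 : 0 < inner ℝ (z - c) e := by
      refine lt_of_le_of_ne h2 fun heq => ?_
      rw [hLfix z heq.symm] at hpos
      linarith
    have hRΩ : L (z - c) + c ∈ Ω := hball (hRball z hz)
    have hRh : L (z - c) + c ∉ holes n ε a := by
      intro hmem
      simp only [holes, mem_iUnion] at hmem
      obtain ⟨m', hm', hmb⟩ := hmem
      rw [mem_closedBall, dist_eq_norm] at hmb
      choose k1 hk1 using hm
      choose k2 hk2 using hm'
      have hmm : m' = m + latVec ε (fun i => k2 i - k1 i) := by
        ext i
        simp only [latVec, PiLp.add_apply, hk1, hk2]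
        push_cast
        ring
      have hdist : ‖m' - m‖ ≤ r + 2 * ε := by
        have e1 : m' - m = -(L (z - c) + c - m') + ((L (z - c) + c - c) + (c - m)) := by abel
        have e2 := norm_add_le (-(L (z - c) + c - m')) ((L (z - c) + c - c) + (c - m))
        have e3 := norm_add_le (L (z - c) + c - c) (c - m)
        rw [← e1, norm_neg] at e2
        rw [hLn] at e3
        linarith
      have hkS : (fun i => k2 i - k1 i) ∈ S := by
        rw [hS, Fintype.mem_piFinset]
        intro i
        have e1 : ‖(m' - m) i‖ ≤ ‖m' - m‖ := PiLp.norm_apply_le _ i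
        rw [PiLp.sub_apply, hk1, hk2, Real.norm_eq_abs, ← mul_sub, abs_mul, abs_of_pos hε] at e1
        have e2 : ε * |(k2 i:ℝ) - k1 i| ≤ ε * N := by linarith
        have e3 : |(k2 i:ℝ) - k1 i| ≤ N := le_of_mul_le_mul_left e2 hε
        rw [Finset.mem_Icc, ← abs_le]
        exact_mod_cast e3
      have hone : M ≤ G (fun i => k2 i - k1 i) z := by
        simp only [hG, Pi.smul_apply, smul_eq_mul]
        rw [← hmm, hLd, mul_assoc]
        exact le_mul_of_one_le_right hM0 (bubble_ge hn ha (norm_nonneg _) hmb)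
      have hall : G (fun i => k2 i - k1 i) z ≤ (∑ k ∈ S, G k) z := by
        rw [Finset.sum_apply]
        exact Finset.single_le_sum (f := fun k => G k z) (fun k _ => hG0 k z) hkS
      linarith
    have hφR : 0 < φ (L (z - c) + c) := h.2.2.2.1 _ ⟨hRΩ, hRh⟩
    obtain ⟨_, _, c1, l1⟩ := ev_point hΩ h hφz
    obtain ⟨_, _, c2, l2⟩ := ev_point hΩ h hφR
    obtain ⟨c3, l3⟩ := laplacian_comp_isom L c c c2
    have c4 : ContDiffAt ℝ 2 Q z := hQc.contDiffAt
    obtain ⟨c5, l5⟩ := hGs z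
    have c6 : ContDiffAt ℝ 2 (φ - fun z => φ (L (z - c) + c)) z := c1.sub c3
    have c7 : ContDiffAt ℝ 2 (Q + ∑ k ∈ S, G k) z := c4.add c5
    refine ⟨?_, c6.sub c7, ?_⟩
    · have ho : IsOpen (ball c r ∩ {z | 0 < inner ℝ (z - c) e}) :=
        isOpen_ball.inter (isOpen_lt continuous_const (by fun_prop))
      refine mem_of_superset (ho.mem_nhds ⟨by simpa [dist_eq_norm] using hlt1, hlt2⟩) ?_
      intro w hw
      have hw2 : 0 < inner ℝ (w - c) e := hw.2
      exact ⟨ball_subset_closedBall hw.1, hw2.le⟩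
    · rw [ContDiffAt.laplacian_sub c6 c7, ContDiffAt.laplacian_sub c1 c3,
        ContDiffAt.laplacian_add c4 c5, l1, l3, l2]
      have l4 : Laplacian.laplacian Q z = 2 * n * α - 2 * γ * ‖e‖ ^ 2 := (hQl z).2
      rw [l4, hen]
      have e1 : φ z ^ p ≤ M ^ p := Real.rpow_le_rpow hφz.le (hM z) hp0.le
      have e2 : 0 ≤ φ (L (z - c) + c) ^ p := Real.rpow_nonneg hRz0 p
      rw [hγ]
      linarith)
  have hxK : x ∈ K := by
    refine ⟨?_, ?_⟩
    · rw [mem_closedBall, dist_eq_norm, hxcn]; linarith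
    · show 0 ≤ inner ℝ (x - c) e
      rw [hxce]; positivity
  have hfin := hmp x hxK
  simp only [Pi.sub_apply, Pi.add_apply, hLx, Finset.sum_apply] at hfin
  have hGy : ∀ k, G k x = M * (2 * a ^ 2) ^ q * (‖y - (m + latVec ε k)‖ ^ 2 + a ^ 2) ^ (-q) := by
    intro k
    simp only [hG, Pi.smul_apply, smul_eq_mul]
    rw [hLd, hLx]
  rw [Finset.sum_congr rfl fun k _ => hGy k] at hfin
  have hQx : Q x ≤ α * ε ^ 2 + γ * r * ε := by
    simp only [hQ, hxcn, hxce]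
    have e1 : α * (d / 2) ^ 2 ≤ α * ε ^ 2 := by gcongr; linarith
    have e2 : γ * r * (d / 2) ≤ γ * r * ε := by gcongr; linarith
    have e3 : 0 ≤ γ * (d / 2) ^ 2 := by positivity
    linarith
  linarith

/-- A preconnected set meeting a set and its complement meets the frontier. -/
lemma preconn_frontier {X : Type*} [TopologicalSpace X] {t u : Set X} (ht : IsPreconnected t)
    {x w : X} (hx : x ∈ t) (hxu : x ∈ u) (hw : w ∈ t) (hwu : w ∉ u) :
    (t ∩ frontier u).Nonempty := by
  by_contra h
  rw [not_nonempty_iff_eq_empty] at h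
  have key : ∀ z ∈ t, z ∈ closure u → z ∈ interior u := by
    intro z hz hc
    by_contra hi
    have : z ∈ t ∩ frontier u := ⟨hz, hc, hi⟩
    rw [h] at this
    exact this
  obtain ⟨z, hz, hz1, hz2⟩ := ht (interior u) (closure u)ᶜ isOpen_interior
    isClosed_closure.isOpen_compl
    (fun z hz => by
      by_cases hc : z ∈ closure u
      · exact Or.inl (key z hz hc)
      · exact Or.inr hc)
    ⟨x, hx, key x hx (subset_closure hxu)⟩
    ⟨w, hw, fun hc => hwu (interior_subset (key w hw hc))⟩
  exact hz2 (subset_closure (interior_subset hz1))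


theorem bubble_le {n : ℕ} (hn : 3 ≤ n) {a : ℝ} (ha : 0 < a) {s u : ℝ} (hu : 0 < u)
    (hs : u ≤ s ^ 2) :
    (2 * a ^ 2) ^ (((n:ℝ) - 2) / 2) * (s ^ 2 + a ^ 2) ^ (-(((n:ℝ) - 2) / 2)) ≤
      (2 * a ^ 2 / u) ^ (((n:ℝ) - 2) / 2) := by
  have hn' : (3:ℝ) ≤ n := by exact_mod_cast hn
  have h1 : 0 < s ^ 2 + a ^ 2 := by positivity
  rw [Real.rpow_neg h1.le, ← div_eq_mul_inv, ← Real.div_rpow (by positivity) h1.le]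
  refine Real.rpow_le_rpow (by positivity) ?_ (by linarith)
  gcongr
  nlinarith [sq_nonneg a]

theorem latVec_norm {n : ℕ} {ε : ℝ} (hε : 0 < ε) {k : Fin n → ℤ} (hk : k ≠ 0) :
    ε ≤ ‖latVec ε k‖ := by
  obtain ⟨i, hi⟩ := Function.ne_iff.1 hk
  have h1 : ‖(latVec ε k) i‖ ≤ ‖latVec ε k‖ := PiLp.norm_apply_le _ i
  have h2 : (1:ℝ) ≤ |(k i : ℝ)| := by
    have : (1:ℤ) ≤ |k i| := Int.one_le_abs (by simpa using hi)
    exact_mod_cast this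
  have h3 : ‖(latVec ε k) i‖ = ε * |(k i : ℝ)| := by
    simp [latVec, abs_of_pos hε]
  rw [h3] at h1
  nlinarith

theorem bubble_sum {n : ℕ} (hn : 3 ≤ n) {ε δ a M : ℝ} (hδ : 0 < δ) (hδ1 : δ ≤ 1) (hδε : δ ^ n = ε)
    (ha : aStar n ε = a) (hM : 0 ≤ M) {m y : Eucl n} (hy : ‖y - m‖ < ε / 2)
    (hy2 : Real.sqrt (ε * a / 2) < ‖y - m‖) {N : ℤ} (hN0 : 0 ≤ N) (hN : (N:ℝ) ≤ 1 / δ + 3) :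
    ∑ k ∈ Fintype.piFinset (fun _ : Fin n => Finset.Icc (-N) N),
        M * (2 * a ^ 2) ^ (((n:ℝ) - 2) / 2) *
          (‖y - (m + latVec ε k)‖ ^ 2 + a ^ 2) ^ (-(((n:ℝ) - 2) / 2)) ≤
      M * (4 ^ (((n:ℝ) - 2) / 2) + 9 ^ n * 8 ^ (((n:ℝ) - 2) / 2)) * δ := by
  have hn' : (3:ℝ) ≤ n := by exact_mod_cast hn
  have hε : 0 < ε := by rw [← hδε]; positivity
  have hεδ : ε ≤ δ := by
    rw [← hδε]; exact pow_le_of_le_one hδ.le hδ1 (by omega)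
  have ha0 : 0 < a := by rw [← ha]; exact Real.rpow_pos_of_pos hε _
  set q := ((n:ℝ) - 2) / 2 with hq
  have hq0 : 0 < q := by rw [hq]; linarith
  have haq : (a / ε) ^ q = ε := by
    have h1 : a / ε = ε ^ (2 / ((n:ℝ) - 2)) := by
      rw [← ha, aStar]
      nth_rewrite 2 [← Real.rpow_one ε]
      rw [← Real.rpow_sub hε]
      congr 1
      have : (n:ℝ) - 2 ≠ 0 := by linarith
      field_simp
      ring
    rw [h1, ← Real.rpow_mul hε.le]
    have : 2 / ((n:ℝ) - 2) * q = 1 := by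
      have : (n:ℝ) - 2 ≠ 0 := by linarith
      rw [hq]; field_simp
    rw [this, Real.rpow_one]
  have hae : 0 ≤ a / ε := by positivity
  have hterm : ∀ k ∈ Fintype.piFinset (fun _ : Fin n => Finset.Icc (-N) N),
      M * (2 * a ^ 2) ^ q * (‖y - (m + latVec ε k)‖ ^ 2 + a ^ 2) ^ (-q) ≤
      M * (8 ^ q * ε ^ 2) + if k = 0 then M * (4 ^ q * ε) else 0 := by
    intro k _
    rw [mul_assoc]
    by_cases hk : k = 0
    · have hl : latVec ε k = 0 := by ext i; simp [latVec, hk]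
      rw [if_pos hk, hl, add_zero]
      have h1 : ε * a / 2 ≤ ‖y - m‖ ^ 2 := by
        exact (Real.sqrt_le_left (norm_nonneg _)).1 hy2.le
      have h2 := bubble_le hn ha0 (by positivity) h1
      have h3 : 2 * a ^ 2 / (ε * a / 2) = 4 * (a / ε) := by field_simp; ring
      rw [h3, Real.mul_rpow (by norm_num) hae, ← hq, haq] at h2
      have h4 : 0 ≤ M * (8 ^ q * ε ^ 2) := by positivity
      have h5 := mul_le_mul_of_nonneg_left h2 hM
      linarith
    · rw [if_neg hk, add_zero]
      have h0 : ε / 2 ≤ ‖y - (m + latVec ε k)‖ := by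
        have e1 := latVec_norm hε hk
        have e2 : latVec ε k = (y - m) - (y - (m + latVec ε k)) := by abel
        have e3 := norm_sub_le (y - m) (y - (m + latVec ε k))
        rw [← e2] at e3
        linarith
      have h1 : (ε / 2) ^ 2 ≤ ‖y - (m + latVec ε k)‖ ^ 2 := by gcongr
      have h2 := bubble_le hn ha0 (by positivity) h1
      have h3 : 2 * a ^ 2 / (ε / 2) ^ 2 = 8 * ((a / ε) * (a / ε)) := by field_simp; ring
      have h4 : (8 * ((a / ε) * (a / ε))) ^ q = 8 ^ q * ε ^ 2 := by
        rw [Real.mul_rpow (by norm_num) (by positivity), Real.mul_rpow hae hae, haq, ← sq]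
      rw [h3, ← hq, h4] at h2
      exact mul_le_mul_of_nonneg_left h2 hM
  refine (Finset.sum_le_sum hterm).trans ?_
  rw [Finset.sum_add_distrib, Finset.sum_const, Finset.sum_ite_eq', nsmul_eq_mul]
  have hcard : ((Fintype.piFinset (fun _ : Fin n => Finset.Icc (-N) N)).card : ℝ) ≤ 9 ^ n / ε := by
    rw [Fintype.card_piFinset]
    simp only [Int.card_Icc, Finset.prod_const, Finset.card_univ, Fintype.card_fin]
    push_cast
    rw [← hδε, ← div_pow]
    refine pow_le_pow_left₀ (by positivity) ?_ n
    have h1 : (((N + 1 - -N).toNat : ℤ) : ℝ) = 2 * N + 1 := by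
      rw [Int.toNat_of_nonneg (by omega)]
      push_cast; ring
    have h2 : (((N + 1 - -N).toNat : ℕ) : ℝ) = 2 * N + 1 := by exact_mod_cast h1
    rw [h2]
    have h3 : 1 ≤ 1 / δ := by rw [one_le_div hδ]; exact hδ1
    have h4 : 9 / δ = 9 * (1 / δ) := by ring
    rw [h4]; linarith
  have h1 : (if (0 : Fin n → ℤ) ∈ Fintype.piFinset (fun _ : Fin n => Finset.Icc (-N) N) then
      M * (4 ^ q * ε) else 0) ≤ M * (4 ^ q * ε) := by
    split_ifs
    · exact le_rfl
    · positivity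
  have h2 : ((Fintype.piFinset (fun _ : Fin n => Finset.Icc (-N) N)).card : ℝ) *
      (M * (8 ^ q * ε ^ 2)) ≤ 9 ^ n / ε * (M * (8 ^ q * ε ^ 2)) := by gcongr
  have h3 : 9 ^ n / ε * (M * (8 ^ q * ε ^ 2)) = M * (9 ^ n * 8 ^ q) * ε := by field_simp
  calc _ ≤ M * (9 ^ n * 8 ^ q) * ε + M * (4 ^ q * ε) := by linarith
    _ = M * (4 ^ q + 9 ^ n * 8 ^ q) * ε := by ring
    _ ≤ _ := by gcongr

theorem ev_onesided {n : ℕ} (hn : 3 ≤ n) {Ω : Set (Eucl n)} (hΩ : IsOpen Ω) {ε δ p : ℝ}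
    (hp0 : 0 < p) {φ : Eucl n → ℝ} (h : IsEVSol n Ω ε (aStar n ε) p φ) {M C1 : ℝ}
    (hM0 : 0 ≤ M) (hM : ∀ x, φ x ≤ M) (hC1 : 0 ≤ C1)
    (hbd : ∀ ξ ∈ frontier Ω, ∀ x ∈ Ω, φ x ≤ C1 * ‖x - ξ‖)
    (hδ : 0 < δ) (hδ1 : δ ≤ 1) (hδε : δ ^ n = ε)
    {m x y : Eucl n} (hm : m ∈ latticePts n ε)
    (hx : ‖x - m‖ < ε / 2) (hy : ‖y - m‖ < ε / 2)
    (hy2 : Real.sqrt (ε * aStar n ε / 2) < ‖y - m‖) :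
    φ x - φ y ≤ (2 * C1 + (M + n * M + M ^ p + 1 +
      M * (4 ^ (((n:ℝ) - 2) / 2) + 9 ^ n * 8 ^ (((n:ℝ) - 2) / 2)))) * δ := by
  have hn' : (3:ℝ) ≤ n := by exact_mod_cast hn
  have hMp : 0 ≤ M ^ p := Real.rpow_nonneg hM0 p
  have hε : 0 < ε := by rw [← hδε]; positivity
  have hε1 : ε ≤ 1 := by rw [← hδε]; exact pow_le_one₀ hδ.le hδ1
  set r := δ ^ (n - 1) with hr
  have hr0 : 0 < r := by positivity
  have hrε : ε = r * δ := by rw [hr, ← hδε, ← pow_succ]; congr 1; omega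
  have hrδ : r ≤ δ := pow_le_of_le_one hδ.le hδ1 (by omega)
  have hεr : ε ≤ r := by rw [hrε]; exact mul_le_of_le_one_right hr0.le hδ1
  set C2 := M + n * M + M ^ p + 1 +
      M * (4 ^ (((n:ℝ) - 2) / 2) + 9 ^ n * 8 ^ (((n:ℝ) - 2) / 2)) with hC2
  have hC20 : 0 ≤ C2 := by positivity
  by_cases hxy : x = y
  · rw [hxy, sub_self]; positivity
  by_cases hball : closedBall (midpoint ℝ x y) r ⊆ Ω
  · have hceil := Int.le_ceil (1 / δ)
    have hceil2 := Int.ceil_lt_add_one (1 / δ)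
    have h1δ : 0 < 1 / δ := by positivity
    set N : ℤ := ⌈1 / δ⌉ + 2 with hN
    have hN0 : 0 ≤ N := by
      have : 0 ≤ ⌈1 / δ⌉ := Int.ceil_nonneg h1δ.le
      omega
    have hNr : (N:ℝ) = (⌈1 / δ⌉ : ℝ) + 2 := by rw [hN]; push_cast; ring
    have hN1 : r + 2 * ε ≤ N * ε := by
      have : r = 1 / δ * ε := by rw [hrε]; field_simp
      rw [hNr]
      nlinarith
    have ha : 0 < aStar n ε := Real.rpow_pos_of_pos hε _
    have haε : aStar n ε ≤ ε := by
      rw [aStar]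
      conv_rhs => rw [← Real.rpow_one ε]
      refine Real.rpow_le_rpow_of_exponent_ge hε hε1 ?_
      rw [one_le_div (by linarith)]
      linarith
    have key := ev_reflect hn hΩ hp0 h hM hε ha haε hm hx hy hxy hεr hball hN1
    have key2 := bubble_sum hn hδ hδ1 hδε rfl hM0 hy hy2 hN0 (by rw [hNr]; linarith)
    have k1 : M / r ^ 2 * ε ^ 2 ≤ M * δ := by
      have : M / r ^ 2 * ε ^ 2 = M * (δ * δ) := by rw [hrε]; field_simp
      rw [this]
      gcongr
      exact mul_le_of_le_one_right hδ.le hδ1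
    have k2 : (n * (M / r ^ 2) + M ^ p + 1) * r * ε ≤ n * M * δ + (M ^ p + 1) * δ := by
      have e1 : (n * (M / r ^ 2) + M ^ p + 1) * r * ε = n * M * δ + (M ^ p + 1) * (r * r * δ) := by
        rw [hrε]; field_simp; ring
      have e2 : r * r * δ ≤ 1 * 1 * δ := by gcongr <;> linarith
      rw [e1]
      have : (M ^ p + 1) * (r * r * δ) ≤ (M ^ p + 1) * δ := by
        refine mul_le_mul_of_nonneg_left (by linarith) (by positivity)
      linarith
    have : C2 * δ = M * δ + (n * M * δ + (M ^ p + 1) * δ) +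
      M * (4 ^ (((n:ℝ) - 2) / 2) + 9 ^ n * 8 ^ (((n:ℝ) - 2) / 2)) * δ := by rw [hC2]; ring
    have h2 : 0 ≤ 2 * C1 * δ := by positivity
    linarith
  · have hφy := ev_nonneg h y
    have hC2δ : 0 ≤ C2 * δ := by positivity
    have hC1δ : 0 ≤ 2 * C1 * δ := by positivity
    by_cases hxΩ : x ∈ Ω
    · obtain ⟨w, hw, hwΩ⟩ := not_subset.1 hball
      obtain ⟨ξ, hξs, hξ⟩ := preconn_frontier (convex_segment x w).isPreconnected
        (left_mem_segment ℝ x w) hxΩ (right_mem_segment ℝ x w) hwΩ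
      have h1 : ‖x - ξ‖ ≤ ‖x - w‖ := by
        have := (convex_closedBall x ‖x - w‖).segment_subset
          (mem_closedBall_self (norm_nonneg _)) (by simp [dist_eq_norm, norm_sub_rev] : w ∈ _) hξs
        rw [mem_closedBall, dist_eq_norm, norm_sub_rev] at this
        exact this
      have h2 : ‖x - w‖ ≤ ‖x - midpoint ℝ x y‖ + r := by
        rw [mem_closedBall, dist_eq_norm, norm_sub_rev] at hw
        have := norm_add_le (x - midpoint ℝ x y) (midpoint ℝ x y - w)
        rw [sub_add_sub_cancel] at this
        linarith
      have h3 : ‖x - midpoint ℝ x y‖ ≤ ε := by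
        have e1 : x - midpoint ℝ x y = (1 / 2 : ℝ) • ((x - m) - (y - m)) := by
          simp [midpoint_eq_smul_add]; module
        rw [e1, norm_smul, Real.norm_of_nonneg (by positivity)]
        have := norm_sub_le (x - m) (y - m)
        linarith
      have h4 : ‖x - ξ‖ ≤ 2 * δ := by linarith
      have h5 := hbd ξ hξ x hxΩ
      have h6 : C1 * ‖x - ξ‖ ≤ C1 * (2 * δ) := by gcongr
      linarith
    · have : φ x = 0 := h.2.2.2.2 x fun hc => hxΩ hc.1
      rw [this]
      linarith


/-- almost flatness on annuli: with ā_ε = (ε a*_ε/2)^{1/2}, there is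
0 < γ̃ < 1 such that the oscillation of φ_ε over B_{ε/2}(m) \ B_{ā_ε}(m) is o(ε^γ̃) for
every m ∈ εℤⁿ ∩ Ω. -/
theorem ev_oscillation_annulus
    (n : ℕ) (hn : 3 ≤ n)
    (Ω : Set (Eucl n)) (hΩo : IsOpen Ω) (hΩb : Bornology.IsBounded Ω)
    (hΩc : IsConnected Ω) (hΩs : HasSmoothBoundary Ω)
    (p : ℝ) (hp0 : 0 < p) (hp1 : p < 1)
    (Φ : ℝ → Eucl n → ℝ)
    (hΦ : ∀ ε ∈ Ioo (0:ℝ) 1, IsEVSol n Ω ε (aStar n ε) p (Φ ε))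
    :
    ∃ γ : ℝ, 0 < γ ∧ γ < 1 ∧ ∃ η : ℝ → ℝ,
      η =o[𝓝[>] (0:ℝ)] (fun ε => ε ^ γ) ∧
      ∀ ε ∈ Ioo (0:ℝ) 1, ∀ m ∈ latticePts n ε ∩ Ω,
        ∀ p₁ ∈ ball m (ε / 2) \ closedBall m (Real.sqrt (ε * aStar n ε / 2)),
        ∀ p₂ ∈ ball m (ε / 2) \ closedBall m (Real.sqrt (ε * aStar n ε / 2)),
          |Φ ε p₁ - Φ ε p₂| ≤ η ε := by
  have hn' : (3:ℝ) ≤ n := by exact_mod_cast hn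
  obtain ⟨D0, hD0⟩ := hΩb.subset_closedBall (0 : Eucl n)
  set D := max D0 0 + 1 with hD
  have hDp : 0 < D := by positivity
  have hDΩ : Ω ⊆ closedBall (0 : Eucl n) D := hD0.trans (closedBall_subset_closedBall (by
    rw [hD]; linarith [le_max_left D0 0]))
  set M := (D ^ 2) ^ (1 / (1 - p)) with hM
  have hM0 : 0 ≤ M := Real.rpow_nonneg (sq_nonneg _) _
  obtain ⟨ρ, hρ, hext⟩ := exterior_ball hΩo hΩb hΩs
  set D1 := 2 * D + ρ with hD1
  have hD1p : 0 < D1 := by positivity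
  set A := (M ^ p + 1) * (D1 ^ 2) ^ ((n:ℝ) + 1) / (ρ ^ 2) ^ (n:ℝ) with hA
  have hMp : 0 ≤ M ^ p := Real.rpow_nonneg hM0 p
  have hA0 : 0 ≤ A := by positivity
  set C1 := A * n * (D1 + ρ) / ρ ^ 2 with hC1
  have hC10 : 0 ≤ C1 := by positivity
  set C := 2 * C1 + (M + n * M + M ^ p + 1 +
      M * (4 ^ (((n:ℝ) - 2) / 2) + 9 ^ n * 8 ^ (((n:ℝ) - 2) / 2))) with hC
  have hn0 : (0:ℝ) < n := by linarith
  refine ⟨1 / (2 * n), by positivity, ?_, fun ε => C * ε ^ (1 / (n:ℝ)), ?_, ?_⟩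
  · rw [div_lt_one (by positivity)]; linarith
  · refine IsLittleO.const_mul_left ?_ C
    have hlt : (1:ℝ) / (2 * n) < 1 / n := by
      rw [div_lt_div_iff₀ (by positivity) hn0]; linarith
    have h0 : Tendsto (fun ε : ℝ => ε ^ (1 / (n:ℝ) - 1 / (2 * n))) (𝓝[>] (0:ℝ)) (𝓝 0) := by
      have hc : ContinuousAt (fun ε : ℝ => ε ^ (1 / (n:ℝ) - 1 / (2 * n))) 0 :=
        Real.continuousAt_rpow_const _ _ (Or.inr (by linarith))
      have := hc.tendsto
      rw [Real.zero_rpow (by linarith)] at this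
      exact this.mono_left nhdsWithin_le_nhds
    refine (isLittleO_iff_tendsto' ?_).2 (h0.congr' ?_)
    · filter_upwards [self_mem_nhdsWithin] with ε hε h00
      exact absurd h00 (Real.rpow_pos_of_pos hε _).ne'
    · filter_upwards [self_mem_nhdsWithin] with ε hε
      exact Real.rpow_sub hε _ _
  · intro ε hε m hm p₁ h1 p₂ h2
    have hsol := hΦ ε hε
    have hb := ev_bound hn hΩo hp0 hp1 hsol hDΩ
    have hbd : ∀ ξ ∈ frontier Ω, ∀ x ∈ Ω, Φ ε x ≤ C1 * ‖x - ξ‖ := by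
      intro ξ hξ x hx
      obtain ⟨y0, hy0, hout⟩ := hext ξ hξ
      have hξD : ξ ∈ closedBall (0 : Eucl n) D :=
        closure_minimal hDΩ isClosed_closedBall (frontier_subset_closure hξ)
      refine ev_boundary hn hΩo hp0 hsol hb hρ hD1p ?_ hout hy0 hA.symm x hx
      intro z hz
      have hzD := hDΩ hz
      rw [mem_closedBall, dist_eq_norm] at hzD hξD ⊢
      rw [sub_zero] at hzD hξD
      have e1 := norm_add_le (z - ξ) (ξ - y0)
      rw [sub_add_sub_cancel] at e1
      have e2 := norm_sub_le z ξ
      rw [hD1]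
      linarith
    have hδ : 0 < ε ^ (1 / (n:ℝ)) := Real.rpow_pos_of_pos hε.1 _
    have hδ1 : ε ^ (1 / (n:ℝ)) ≤ 1 := Real.rpow_le_one hε.1.le hε.2.le (by positivity)
    have hδε : (ε ^ (1 / (n:ℝ))) ^ n = ε := by
      rw [← Real.rpow_natCast, ← Real.rpow_mul hε.1.le, one_div_mul_cancel hn0.ne', Real.rpow_one]
    have ha1 : ‖p₁ - m‖ < ε / 2 := by simpa [dist_eq_norm] using h1.1
    have ha2 : ‖p₂ - m‖ < ε / 2 := by simpa [dist_eq_norm] using h2.1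
    have hb1 : Real.sqrt (ε * aStar n ε / 2) < ‖p₁ - m‖ := by
      have := h1.2
      rw [mem_closedBall, dist_eq_norm, not_le] at this
      exact this
    have hb2 : Real.sqrt (ε * aStar n ε / 2) < ‖p₂ - m‖ := by
      have := h2.2
      rw [mem_closedBall, dist_eq_norm, not_le] at this
      exact this
    have k1 := ev_onesided hn hΩo hp0 hsol hM0 hb hC10 hbd hδ hδ1 hδε hm.1 ha1 ha2 hb2
    have k2 := ev_onesided hn hΩo hp0 hsol hM0 hb hC10 hbd hδ hδ1 hδε hm.1 ha2 ha1 hb1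
    rw [abs_le]
    constructor
    · linarith
    · exact k1
end
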